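/- Let A be a unital C*-algebra with a comultiplication φ : A → A ⊗ A (minimal tensor product), and let h be a faithful state on A which is both left and right invariant: (ι ⊗ h)φ(a) = h(a)1 and (h ⊗ ι)φ(a) = h(a)1 for all a ∈ A. Then the map T_1 : A ⊗_h A → A ⊗ A extending a ⊗ b ↦ φ(a)(1 ⊗ b) is injective; in particular, if x ∈ A ⊙ A satisfies T_1(x) = 0 then x = 0. -/

import Mathlib

open scoped TensorProduct

/-- The Haagerup norm of an element of the algebraic tensor product `A ⊙ A`:
the infimum of `‖∑ pᵢ pᵢ*‖^{1/2} · ‖∑ qᵢ* qᵢ‖^{1/2}` over all finite representations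
`x = ∑ pᵢ ⊗ qᵢ`. -/
noncomputable def haagerupNorm (A : Type*) [NonUnitalNormedRing A] [StarRing A]
    [NormedSpace ℂ A] (x : A ⊗[ℂ] A) : ℝ :=
  sInf { c : ℝ | ∃ (n : ℕ) (p q : Fin n → A),
    x = ∑ i, p i ⊗ₜ[ℂ] q i ∧
    c = Real.sqrt ‖∑ i, p i * star (p i)‖ * Real.sqrt ‖∑ i, star (q i) * q i‖ }

open scoped ComplexOrder

section HaagerupAux
open scoped ComplexOrder MatrixOrder
open Filter Topology

theorem aux_sq_expand {A : Type*} [CStarAlgebra A] {I J : Type*} [Fintype I] [Fintype J]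
    (F : J → I → ℂ) (p : I → A) :
    ∑ i, (∑ j, F i j • p j) * star (∑ j, F i j • p j) =
      ∑ j, ∑ k, (∑ i, F i j * star (F i k)) • (p j * star (p k)) := by
  simp_rw [star_sum, Finset.sum_mul, Finset.mul_sum, Finset.sum_smul, star_smul, smul_mul_smul_comm]
  rw [Finset.sum_comm]
  refine Finset.sum_congr rfl fun j _ => ?_
  rw [Finset.sum_comm]

theorem aux_row_bound_fintype {A : Type*} [CStarAlgebra A] {I J : Type*} [Fintype I] [Fintype J]
    (p : I → A) (b : J → I → ℂ) (C : ℝ)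
    (hb : ∀ v : I → ℂ, ∑ i, ‖∑ j, b i j * v j‖ ^ 2 ≤ C * ∑ j, ‖v j‖ ^ 2) (hC : 0 ≤ C) :
    ‖∑ i, (∑ j, b i j • p j) * star (∑ j, b i j • p j)‖ ≤
      C * ‖∑ j, p j * star (p j)‖ := by
  classical
  let _ := CStarAlgebra.spectralOrder A
  have _ := CStarAlgebra.spectralOrderedRing A
  have hN : (Matrix.of fun j k : I => (if j = k then (C : ℂ) else 0) -
      ∑ i, b i j * star (b i k)).PosSemidef := by
    apply Matrix.PosSemidef.of_dotProduct_mulVec_nonneg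
    · ext j k
      simp only [Matrix.conjTranspose_apply, Matrix.of_apply, star_sub, star_sum, star_mul',
        star_star]
      congr 1
      · by_cases h : j = k
        · subst h; simp
        · simp [h, Ne.symm h]
      · exact Finset.sum_congr rfl fun i _ => mul_comm _ _
    · intro x
      have hv := hb (star x)
      have e := aux_sq_expand (A := ℂ) b (star x)
      have : star x ⬝ᵥ (Matrix.of fun j k : I => (if j = k then (C : ℂ) else 0) -
          ∑ i, b i j * star (b i k)).mulVec x =
          ((C * ∑ j, ‖(star x) j‖ ^ 2 - ∑ i, ‖∑ j, b i j * (star x) j‖ ^ 2 : ℝ) : ℂ) := by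
        simp only [dotProduct, Matrix.mulVec, Matrix.of_apply, sub_mul, Finset.sum_sub_distrib,
          mul_sub, ite_mul, zero_mul, Finset.sum_ite_eq, Finset.mem_univ, if_true]
        push_cast
        congr 1
        · rw [Finset.mul_sum]
          refine Finset.sum_congr rfl fun j _ => ?_
          rw [← Complex.mul_conj']
          simp only [Pi.star_apply, RCLike.star_def, Complex.conj_conj]; ring
        · simp_rw [← Complex.mul_conj']
          simp only [smul_eq_mul, RCLike.star_def] at e
          rw [e]
          refine Finset.sum_congr rfl fun j _ => ?_
          rw [Finset.mul_sum]
          refine Finset.sum_congr rfl fun k _ => ?_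
          simp only [Pi.star_apply, RCLike.star_def, Complex.conj_conj]; ring
      rw [this]
      exact_mod_cast sub_nonneg.2 hv
  obtain ⟨B, hB⟩ := CStarAlgebra.nonneg_iff_eq_star_mul_self.mp hN.nonneg
  have hB' : ∀ j k, ∑ i, star (B i j) * star (star (B i k)) = (if j = k then (C : ℂ) else 0) -
      ∑ i, b i j * star (b i k) := by
    intro j k
    have := congrFun (congrFun hB j) k
    simp only [Matrix.of_apply, Matrix.mul_apply, Matrix.star_apply] at this
    rw [this]; simp
  have key : ∑ i, (∑ j, b i j • p j) * star (∑ j, b i j • p j) ≤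
      (C : ℂ) • ∑ j, p j * star (p j) := by
    have e := aux_sq_expand (fun i j => star (B i j)) p
    simp only [hB', sub_smul, Finset.sum_sub_distrib, ite_smul, zero_smul, Finset.sum_ite_eq,
      Finset.mem_univ, if_true] at e
    rw [← aux_sq_expand b p, ← Finset.smul_sum] at e
    rw [← sub_nonneg, ← e]
    exact Finset.sum_nonneg fun i _ => mul_star_self_nonneg _
  calc _ ≤ ‖(C : ℂ) • ∑ j, p j * star (p j)‖ :=
        CStarAlgebra.norm_le_norm_of_nonneg_of_le
          (Finset.sum_nonneg fun i _ => mul_star_self_nonneg _) key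
    _ = _ := by rw [norm_smul]; simp [abs_of_nonneg hC]

/-- Scalar matrices of bounded norm act boundedly on rows. -/
theorem aux_row_bound {A : Type*} [CStarAlgebra A] {I J : Type*}
    (s : Finset J) (t : Finset I) (p : I → A) (b : J → I → ℂ) (C : ℝ)
    (hb : ∀ v : I → ℂ, ∑ i ∈ s, ‖∑ j ∈ t, b i j * v j‖ ^ 2 ≤ C * ∑ j ∈ t, ‖v j‖ ^ 2) (hC : 0 ≤ C) :
    ‖∑ i ∈ s, (∑ j ∈ t, b i j • p j) * star (∑ j ∈ t, b i j • p j)‖ ≤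
      C * ‖∑ j ∈ t, p j * star (p j)‖ := by
  classical
  have := aux_row_bound_fintype (I := t) (J := s) (fun j => p j) (fun i j => b i j) C ?_ hC
  · rw [← Finset.sum_coe_sort s]
    simp only [← Finset.sum_coe_sort t]
    exact this
  · intro x
    have hv := hb (fun j => if h : j ∈ t then x ⟨j, h⟩ else 0)
    rw [← Finset.sum_coe_sort s] at hv
    simp only [← Finset.sum_coe_sort t] at hv
    simpa using hv

theorem aux_norm_sum_smul {A : Type*} [CStarAlgebra A] {I : Type*}
    (t : Finset I) (p : I → A) (v : I → ℂ) :
    ‖∑ j ∈ t, v j • p j‖ ^ 2 ≤ (∑ j ∈ t, ‖v j‖ ^ 2) * ‖∑ j ∈ t, p j * star (p j)‖ := by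
  have := aux_row_bound (J := Unit) Finset.univ t p (fun _ => v) (∑ j ∈ t, ‖v j‖ ^ 2) ?_
    (by positivity)
  · simp only [Finset.univ_unique, Finset.sum_const, Finset.card_singleton, one_smul,
      CStarRing.norm_self_mul_star] at this
    rwa [sq]
  · intro w
    simp only [Finset.univ_unique, Finset.sum_const, Finset.card_singleton, one_smul]
    calc ‖∑ j ∈ t, v j * w j‖ ^ 2 ≤ (∑ j ∈ t, ‖v j‖ * ‖w j‖) ^ 2 := by
          gcongr
          exact (norm_sum_le _ _).trans (by simp)
      _ ≤ _ := Finset.sum_mul_sq_le_sq_mul_sq _ _ _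

theorem aux_norm_sum_mono {A : Type*} [CStarAlgebra A] {I : Type*}
    {s t : Finset I} (hst : s ⊆ t) (p : I → A) :
    ‖∑ j ∈ s, p j * star (p j)‖ ≤ ‖∑ j ∈ t, p j * star (p j)‖ := by
  let _ := CStarAlgebra.spectralOrder A
  have _ := CStarAlgebra.spectralOrderedRing A
  exact CStarAlgebra.norm_le_norm_of_nonneg_of_le
    (Finset.sum_nonneg fun i _ => mul_star_self_nonneg _)
    (Finset.sum_le_sum_of_subset_of_nonneg hst fun i _ _ => mul_star_self_nonneg _)

/-- Partial sums of a summable family `p p*` are bounded. -/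
theorem aux_bound {A : Type*} [CStarAlgebra A] {I : Type*} {p : I → A}
    (hp : Summable fun i => p i * star (p i)) :
    ∃ M : ℝ, 0 ≤ M ∧ ∀ s : Finset I, ‖∑ j ∈ s, p j * star (p j)‖ ≤ M ^ 2 := by
  classical
  obtain ⟨t, ht⟩ := summable_iff_vanishing_norm.1 hp 1 one_pos
  refine ⟨√(‖∑ j ∈ t, p j * star (p j)‖ + 1), Real.sqrt_nonneg _, fun s => ?_⟩
  rw [Real.sq_sqrt (by positivity)]
  calc _ ≤ ‖∑ j ∈ t ∪ (s \ t), p j * star (p j)‖ := aux_norm_sum_mono (by intro; simp; tauto) p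
    _ = ‖∑ j ∈ t, p j * star (p j) + ∑ j ∈ s \ t, p j * star (p j)‖ := by
        rw [Finset.sum_union Finset.disjoint_sdiff]
    _ ≤ _ := (norm_add_le _ _).trans (by gcongr; exact (ht _ Finset.sdiff_disjoint).le)

theorem aux_R {A : Type*} [CStarAlgebra A] {I : Type*} {p : I → A}
    (hp : Summable fun i => p i * star (p i)) :
    ∃ R : lp (fun _ : I => ℂ) 2 →L[ℂ] A, ∀ v, HasSum (fun i => v i • p i) (R v) := by
  classical
  obtain ⟨M, hM0, hM⟩ := aux_bound hp
  have hle : ∀ (v : I → ℂ) (s : Finset I),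
      ‖∑ i ∈ s, v i • p i‖ ^ 2 ≤ (∑ i ∈ s, ‖v i‖ ^ 2) * M ^ 2 := fun v s =>
    (aux_norm_sum_smul s p v).trans (by gcongr; exact hM s)
  have hsq : ∀ v : lp (fun _ : I => ℂ) 2, HasSum (fun i => ‖v i‖ ^ 2) (‖v‖ ^ 2) := by
    intro v
    have := lp.hasSum_norm (p := 2) (by norm_num) v
    simpa using this
  have hsum : ∀ v : lp (fun _ : I => ℂ) 2, Summable fun i => v i • p i := by
    intro v
    rw [summable_iff_vanishing_norm]
    intro ε hε
    obtain ⟨s, hs⟩ := summable_iff_vanishing_norm.1 (hsq v).summable (ε ^ 2 / (M ^ 2 + 1))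
      (by positivity)
    refine ⟨s, fun t ht => ?_⟩
    have h1 := hs t ht
    rw [Real.norm_of_nonneg (by positivity), lt_div_iff₀ (by positivity)] at h1
    have h2 := hle v t
    have h3 : 0 ≤ ∑ i ∈ t, ‖v i‖ ^ 2 := by positivity
    refine lt_of_pow_lt_pow_left₀ 2 hε.le ?_
    nlinarith
  let L : lp (fun _ : I => ℂ) 2 →ₗ[ℂ] A :=
    { toFun := fun v => ∑' i, v i • p i
      map_add' := fun v w => by
        rw [← (hsum v).tsum_add (hsum w)]
        simp [add_smul]
      map_smul' := fun c v => by
        simp only [RingHom.id_apply]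
        rw [← (hsum v).tsum_const_smul c]
        simp [mul_smul] }
  refine ⟨L.mkContinuous M fun v => ?_, fun v => (hsum v).hasSum⟩
  refine le_of_tendsto ((hsum v).hasSum.norm) (Eventually.of_forall fun s => ?_)
  refine (pow_le_pow_iff_left₀ (norm_nonneg _) (by positivity) two_ne_zero).1 ((hle v s).trans ?_)
  rw [mul_pow, mul_comm]
  gcongr
  exact sum_le_hasSum s (fun i _ => by positivity) (hsq v)

theorem aux_star_summable {A : Type*} [CStarAlgebra A] {I : Type*} {q : I → A}
    (hq : Summable fun i => star (q i) * q i) :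
    Summable fun i => star (q i) * star (star (q i)) := by simpa using hq

theorem aux_mem {A : Type*} [CStarAlgebra A] {I : Type*} {q : I → A}
    (hq : Summable fun i => star (q i) * q i) (g : A →L[ℂ] ℂ) :
    Memℓp (fun i => g (q i)) 2 := by
  obtain ⟨M, hM0, hM⟩ := aux_bound (aux_star_summable hq)
  refine memℓp_gen' (C := ‖g‖ ^ 2 * M ^ 2) fun s => ?_
  have h1 := aux_norm_sum_smul s (fun i => star (q i)) (fun i => g (q i))
  have h2 : ((∑ i ∈ s, ‖g (q i)‖ ^ 2 : ℝ) : ℂ) = g (star (∑ i ∈ s, g (q i) • star (q i))) := by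
    simp only [star_sum, star_smul, star_star, map_sum, map_smul, smul_eq_mul]
    push_cast
    exact Finset.sum_congr rfl fun i _ => by rw [← Complex.conj_mul']; rfl
  have h3 : ∑ i ∈ s, ‖g (q i)‖ ^ 2 ≤ ‖g‖ * ‖∑ i ∈ s, g (q i) • star (q i)‖ := by
    have := g.le_opNorm (star (∑ i ∈ s, g (q i) • star (q i)))
    rw [← h2, norm_star, Complex.norm_real, Real.norm_of_nonneg (by positivity)] at this
    exact this
  have h4 := hM s
  have h0 : 0 ≤ ∑ i ∈ s, ‖g (q i)‖ ^ 2 := by positivity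
  simp only [ENNReal.toReal_ofNat, Real.rpow_ofNat]
  rcases h0.eq_or_lt with h | h
  · rw [← h]; positivity
  · refine le_of_mul_le_mul_left ?_ h
    calc _ ≤ (‖g‖ * ‖∑ i ∈ s, g (q i) • star (q i)‖) * (‖g‖ * ‖∑ i ∈ s, g (q i) • star (q i)‖) := by
          gcongr
      _ = ‖g‖ ^ 2 * ‖∑ i ∈ s, g (q i) • star (q i)‖ ^ 2 := by ring
      _ ≤ ‖g‖ ^ 2 * ((∑ i ∈ s, ‖g (q i)‖ ^ 2) * M ^ 2) := by
          gcongr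
          exact h1.trans (by gcongr)
      _ = _ := by ring

open Classical in
theorem aux_proj_bound {A : Type*} [CStarAlgebra A] {I : Type*} (p : I → A)
    (P : lp (fun _ : I => ℂ) 2 →L[ℂ] lp (fun _ : I => ℂ) 2)
    (hsym : ∀ u v, inner ℂ (P u) v = inner ℂ u (P v)) (hn : ∀ u, ‖P u‖ ≤ ‖u‖) (s t : Finset I) :
    ‖∑ i ∈ s, (∑ j ∈ t, P (lp.single 2 i 1) j • p j) * star (∑ j ∈ t, P (lp.single 2 i 1) j • p j)‖
      ≤ ‖∑ j ∈ t, p j * star (p j)‖ := by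
  have := aux_row_bound s t p (fun i j => P (lp.single 2 i 1) j) 1 ?_ zero_le_one
  · simpa only [one_mul] using this
  intro v
  rw [one_mul]
  let w : lp (fun _ : I => ℂ) 2 := ∑ j ∈ t, lp.single 2 j (star (v j))
  have h1 : ∀ i, ∑ j ∈ t, P (lp.single 2 i 1) j * v j = star (P w i) := by
    intro i
    have h : inner ℂ (P w) (lp.single 2 i (1 : ℂ)) = inner ℂ w (P (lp.single 2 i (1 : ℂ))) := hsym _ _
    rw [lp.inner_single_right] at h
    simp only [w, sum_inner, lp.inner_single_left] at h
    simp only [RCLike.inner_apply, one_mul, RCLike.star_def, Complex.conj_conj] at h ⊢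
    exact h.symm
  simp only [h1, norm_star]
  have h2 := lp.sum_rpow_le_norm_rpow (p := 2) (by norm_num) (P w) s
  have h3 := lp.norm_sum_single (p := 2) (E := fun _ : I => ℂ) (by norm_num) (fun j => star (v j)) t
  simp only [ENNReal.toReal_ofNat, Real.rpow_ofNat, norm_star] at h2 h3
  rw [← h3]
  exact h2.trans (by gcongr; exact hn w)

open Classical in
/-- Slice maps separate points: an absolutely representable element all of whose right slices
vanish is zero. -/
theorem aux_core {A X : Type*} [CStarAlgebra A] [NormedAddCommGroup X] [NormedSpace ℂ X]
    {I : Type*} (τ : A →L[ℂ] A →L[ℂ] X)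
    (hτ : ∀ (s : Finset I) (p q : I → A), ‖∑ i ∈ s, τ (p i) (q i)‖ ≤
      √‖∑ i ∈ s, p i * star (p i)‖ * √‖∑ i ∈ s, star (q i) * q i‖)
    (p q : I → A) (hp : Summable fun i => p i * star (p i))
    (hq : Summable fun i => star (q i) * q i) (z : X)
    (hz : HasSum (fun i => τ (p i) (q i)) z)
    (hslice : ∀ g : A →L[ℂ] ℂ, HasSum (fun i => g (q i) • p i) 0) : z = 0 := by
  obtain ⟨Mp, hMp0, hMp⟩ := aux_bound hp
  have hq' := aux_star_summable hq
  obtain ⟨Mq, hMq0, hMq⟩ := aux_bound hq'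
  obtain ⟨R, hR⟩ := aux_R hp
  obtain ⟨S, hS⟩ := aux_R hq'
  let K : Submodule ℂ (lp (fun _ : I => ℂ) 2) := LinearMap.ker (R : lp (fun _ : I => ℂ) 2 →ₗ[ℂ] A)
  have : CompleteSpace K := R.completeSpace_ker
  let P := K.starProjection
  let Q := Kᗮ.starProjection
  let e : I → lp (fun _ : I => ℂ) 2 := fun i => lp.single 2 i 1
  have hP1 : ∀ u, P u ∈ K := fun u => K.starProjection_apply_mem u
  have hQ1 : ∀ u, Q u ∈ Kᗮ := fun u => Kᗮ.starProjection_apply_mem u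
  have hPQ : ∀ u, P u + Q u = u := fun u => K.starProjection_add_starProjection_orthogonal u
  have hPs : ∀ u v, inner ℂ (P u) v = inner ℂ u (P v) := K.inner_starProjection_left_eq_right
  have hQs : ∀ u v, inner ℂ (Q u) v = inner ℂ u (Q v) := Kᗮ.inner_starProjection_left_eq_right
  have hPn : ∀ u, ‖P u‖ ≤ ‖u‖ := fun u => K.norm_starProjection_apply_le u
  have hQn : ∀ u, ‖Q u‖ ≤ ‖u‖ := fun u => Kᗮ.norm_starProjection_apply_le u
  have hRP : ∀ u, R (P u) = 0 := fun u => hP1 u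
  have hSQ : ∀ u, S (Q u) = 0 := by
    intro u
    rw [← star_eq_zero]
    refine SeparatingDual.eq_zero_of_forall_dual_eq_zero (R := ℂ) fun g => ?_
    let vg : lp (fun _ : I => ℂ) 2 := ⟨fun i => g (q i), aux_mem hq g⟩
    have hvg : vg ∈ K := (hR vg).unique (hslice g)
    have h1 : inner ℂ (Q u) vg = 0 := Submodule.inner_left_of_mem_orthogonal hvg (hQ1 u)
    have h2 := lp.hasSum_inner (𝕜 := ℂ) (Q u) vg
    rw [h1] at h2
    have h3 := ((hS (Q u)).star.mapL g)
    refine h3.unique ?_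
    convert h2 using 2 with i
    simp [vg, mul_comm]
  have hRe : ∀ i, R (e i) = p i := by
    intro i
    refine (hR (e i)).unique ?_
    convert hasSum_single i ?_ using 1
    · simp [e]
    · intro j hj
      simp [e, hj]
  have hSe : ∀ i, S (e i) = star (q i) := by
    intro i
    refine (hS (e i)).unique ?_
    convert hasSum_single i ?_ using 1
    · simp [e]
    · intro j hj
      simp [e, hj]
  have hRQ : ∀ i, R (Q (e i)) = p i := fun i => by
    rw [← hRe i]; conv_rhs => rw [← hPQ (e i), map_add, hRP, zero_add]
  have hSP : ∀ i, S (P (e i)) = star (q i) := fun i => by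
    rw [← hSe i]; conv_rhs => rw [← hPQ (e i), map_add, hSQ, add_zero]
  let f : Finset I → I → A := fun t i => ∑ j ∈ t, Q (e i) j • p j
  let k : Finset I → I → A := fun t i => star (∑ j ∈ t, P (e i) j • star (q j))
  have hf : ∀ i, Tendsto (fun t => f t i) atTop (𝓝 (p i)) := fun i => by
    rw [← hRQ i]; exact hR (Q (e i))
  have hk : ∀ i, Tendsto (fun t => k t i) atTop (𝓝 (q i)) := fun i => by
    rw [← star_star (q i), ← hSP i]; exact Tendsto.star (hS (P (e i)))
  let w : Finset I → Finset I → X := fun s t => ∑ i ∈ s, τ (f t i) (k t i)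
  have hw1 : ∀ s, Tendsto (w s) atTop (𝓝 (∑ i ∈ s, τ (p i) (q i))) := fun s =>
    tendsto_finsetSum _ fun i _ => (τ.continuous₂.tendsto (p i, q i)).comp ((hf i).prodMk_nhds (hk i))
  have hw2 : ∀ t, Tendsto (fun s => w s t) atTop (𝓝 0) := by
    intro t
    have h1 : ∀ s, w s t = ∑ j ∈ t, ∑ l ∈ t,
        (∑ i ∈ s, Q (e i) j * star (P (e i) l)) • τ (p j) (q l) := by
      intro s
      simp only [w, f, k, star_sum, star_smul, star_star, map_sum, map_smul, smul_apply, sum_apply,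
        Finset.sum_smul, Finset.smul_sum, smul_smul]
      rw [Finset.sum_comm]
      conv_rhs => rw [Finset.sum_comm]
      refine Finset.sum_congr rfl fun y _ => ?_
      rw [Finset.sum_comm]
      exact Finset.sum_congr rfl fun _ _ => Finset.sum_congr rfl fun _ _ => by rw [mul_comm]
    have h2 : ∀ j l, Tendsto (fun s : Finset I => ∑ i ∈ s, Q (e i) j * star (P (e i) l)) atTop (𝓝 0) := by
      intro j l
      have h3 := lp.hasSum_inner (𝕜 := ℂ) (Q (e j)) (P (e l))
      rw [Submodule.inner_left_of_mem_orthogonal (hP1 _) (hQ1 _)] at h3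
      refine Tendsto.congr (fun s => Finset.sum_congr rfl fun i _ => ?_) h3
      have hQc : Q (e i) j = star (Q (e j) i) := by
        have h := hQs (e j) (e i)
        rw [lp.inner_single_right, lp.inner_single_left] at h
        simpa using h.symm
      have hPc : P (e l) i = star (P (e i) l) := by
        have h := hPs (e i) (e l)
        rw [lp.inner_single_right, lp.inner_single_left] at h
        simpa using h.symm
      rw [hQc, ← hPc]
      simp [mul_comm]
    simp only [h1]
    rw [show (0 : X) = ∑ j ∈ t, ∑ l ∈ t, (0 : ℂ) • τ (p j) (q l) by simp]
    exact tendsto_finsetSum _ fun j _ => tendsto_finsetSum _ fun l _ => (h2 j l).smul_const _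
  have hfb : ∀ s t, √‖∑ i ∈ s, f t i * star (f t i)‖ ≤ √‖∑ j ∈ t, p j * star (p j)‖ := fun s t =>
    Real.sqrt_le_sqrt (aux_proj_bound p Q hQs hQn s t)
  have hkb : ∀ s t, √‖∑ i ∈ s, star (k t i) * k t i‖ ≤ √‖∑ j ∈ t, star (q j) * q j‖ := fun s t => by
    have := Real.sqrt_le_sqrt (aux_proj_bound (fun j => star (q j)) P hPs hPn s t)
    simpa only [k, star_star] using this
  have hMp' : ∀ t : Finset I, √‖∑ j ∈ t, p j * star (p j)‖ ≤ Mp := fun t =>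
    Real.sqrt_le_iff.2 ⟨hMp0, hMp t⟩
  have hMq' : ∀ t : Finset I, √‖∑ j ∈ t, star (q j) * q j‖ ≤ Mq := fun t =>
    Real.sqrt_le_iff.2 ⟨hMq0, by simpa using hMq t⟩
  have main : ∀ η : ℝ, 0 < η → ‖z‖ ≤ η * Mq + Mp * η := by
    intro η hη
    obtain ⟨t1, ht1⟩ := summable_iff_vanishing_norm.1 hp (η ^ 2) (by positivity)
    obtain ⟨t2, ht2⟩ := summable_iff_vanishing_norm.1 hq (η ^ 2) (by positivity)
    let t := t1 ∪ t2
    have hw3 : ∀ s t', t ⊆ t' → ‖w s t' - w s t‖ ≤ η * Mq + Mp * η := by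
      intro s t' htt'
      have hfs : ∀ i, f t' i = f (t' \ t) i + f t i := fun i =>
        (Finset.sum_sdiff htt').symm
      have hks : ∀ i, k t' i = k (t' \ t) i + k t i := fun i => by
        simp only [k]; rw [← Finset.sum_sdiff htt', star_add]
      have hd : w s t' - w s t =
          ∑ i ∈ s, τ (f (t' \ t) i) (k t' i) + ∑ i ∈ s, τ (f t i) (k (t' \ t) i) := by
        simp only [w]
        rw [← Finset.sum_sub_distrib, ← Finset.sum_add_distrib]
        refine Finset.sum_congr rfl fun i _ => ?_
        rw [hfs i, hks i]
        simp only [map_add, add_apply]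
        abel
      rw [hd]
      have d1 : Disjoint (t' \ t) t1 :=
        Finset.disjoint_of_subset_right Finset.subset_union_left Finset.sdiff_disjoint
      have d2 : Disjoint (t' \ t) t2 :=
        Finset.disjoint_of_subset_right Finset.subset_union_right Finset.sdiff_disjoint
      refine (norm_add_le _ _).trans (add_le_add ?_ ?_)
      · refine (hτ s _ _).trans (mul_le_mul ?_ ((hkb s t').trans (hMq' t')) (by positivity) hη.le)
        exact (hfb s _).trans (Real.sqrt_le_iff.2 ⟨hη.le, (ht1 _ d1).le⟩)
      · refine (hτ s _ _).trans (mul_le_mul ((hfb s t).trans (hMp' t)) ?_ (by positivity) hMp0)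
        exact (hkb s _).trans (Real.sqrt_le_iff.2 ⟨hη.le, (ht2 _ d2).le⟩)
    have hw4 : ∀ s, ‖∑ i ∈ s, τ (p i) (q i) - w s t‖ ≤ η * Mq + Mp * η := fun s =>
      le_of_tendsto ((hw1 s).sub_const _).norm
        ((eventually_ge_atTop t).mono fun t' ht' => hw3 s t' ht')
    have h5 : Tendsto (fun s => ‖∑ i ∈ s, τ (p i) (q i) - w s t‖) atTop (𝓝 ‖z - 0‖) :=
      (Tendsto.sub hz (hw2 t)).norm
    rw [sub_zero] at h5
    exact le_of_tendsto h5 (Eventually.of_forall hw4)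
  rw [← norm_le_zero_iff]
  have hlim : Tendsto (fun η : ℝ => η * Mq + Mp * η) (𝓝[>] 0) (𝓝 0) := by
    have : Tendsto (fun η : ℝ => η * Mq + Mp * η) (𝓝 0) (𝓝 (0 * Mq + Mp * 0)) :=
      Continuous.tendsto (by fun_prop) 0
    simp only [zero_mul, mul_zero, add_zero] at this
    exact this.mono_left nhdsWithin_le_nhds
  exact ge_of_tendsto hlim (eventually_mem_nhdsWithin.mono fun η hη => main η hη)

theorem aux_haag_le {A : Type*} [CStarAlgebra A] {I : Type*} (s : Finset I) (p q : I → A) :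
    haagerupNorm A (∑ i ∈ s, p i ⊗ₜ[ℂ] q i) ≤
      √‖∑ i ∈ s, p i * star (p i)‖ * √‖∑ i ∈ s, star (q i) * q i‖ := by
  refine csInf_le ⟨0, ?_⟩ ?_
  · rintro c ⟨n, p, q, -, rfl⟩
    positivity
  · have key : ∀ {M : Type _} [AddCommMonoid M] (F : I → M),
        ∑ i : Fin s.card, F (s.equivFin.symm i) = ∑ i ∈ s, F i := by
      intro M _ F
      rw [← Finset.sum_coe_sort s]
      exact Equiv.sum_comp s.equivFin.symm (fun i : s => F i)
    refine ⟨s.card, fun i => p (s.equivFin.symm i), fun i => q (s.equivFin.symm i), ?_, ?_⟩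
    · exact (Finset.sum_coe_sort s (fun i => p i ⊗ₜ[ℂ] q i)).symm.trans
        (Equiv.sum_comp s.equivFin.symm (fun i : s => p i ⊗ₜ[ℂ] q i)).symm
    · rw [key (fun i => p i * star (p i)), key (fun i => star (q i) * q i)]

theorem aux_exists_fin {A : Type*} [CStarAlgebra A] (x : A ⊗[ℂ] A) :
    ∃ (n : ℕ) (p q : Fin n → A), x = ∑ i, p i ⊗ₜ[ℂ] q i := by
  obtain ⟨s, hs⟩ := TensorProduct.exists_finset x
  refine ⟨s.card, fun i => (s.equivFin.symm i).1.1, fun i => (s.equivFin.symm i).1.2, ?_⟩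
  rw [hs]
  exact (Finset.sum_coe_sort s (fun i => i.1 ⊗ₜ[ℂ] i.2)).symm.trans
        (Equiv.sum_comp s.equivFin.symm (fun i : s => i.1.1 ⊗ₜ[ℂ] i.1.2)).symm

theorem aux_repr {A : Type*} [CStarAlgebra A] (x : A ⊗[ℂ] A) (ε : ℝ) (hε : 0 < ε)
    (hx : haagerupNorm A x < ε) :
    ∃ (n : ℕ) (p q : Fin n → A), x = ∑ i, p i ⊗ₜ[ℂ] q i ∧
      ‖∑ i, p i * star (p i)‖ ≤ ε ∧ ‖∑ i, star (q i) * q i‖ ≤ ε := by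
  obtain ⟨n0, p0, q0, h0⟩ := aux_exists_fin x
  unfold haagerupNorm at hx
  obtain ⟨c, ⟨n, p, q, hpq, rfl⟩, hc⟩ :=
    exists_lt_of_csInf_lt (Set.nonempty_of_mem (by exact ⟨n0, p0, q0, h0, rfl⟩)) hx
  set P := √‖∑ i, p i * star (p i)‖ with hP
  set Q := √‖∑ i, star (q i) * q i‖ with hQ
  have hP2 : ‖∑ i, p i * star (p i)‖ = P ^ 2 := (Real.sq_sqrt (norm_nonneg _)).symm
  have hQ2 : ‖∑ i, star (q i) * q i‖ = Q ^ 2 := (Real.sq_sqrt (norm_nonneg _)).symm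
  have hP0 : 0 ≤ P := Real.sqrt_nonneg _
  have hQ0 : 0 ≤ Q := Real.sqrt_nonneg _
  obtain ⟨P', hP'0, hPP', hP'Q⟩ : ∃ P' : ℝ, 0 < P' ∧ P ≤ P' ∧ P' * Q ≤ ε := by
    rcases hP0.eq_or_lt with h | h
    · refine ⟨ε / (Q + 1), by positivity, by rw [← h]; positivity, ?_⟩
      rw [div_mul_eq_mul_div, div_le_iff₀ (by positivity)]
      nlinarith
    · exact ⟨P, h, le_rfl, hc.le⟩
  set l : ℝ := √ε / P' with hl
  have hl0 : 0 < l := by positivity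
  have hse : √ε ^ 2 = ε := Real.sq_sqrt hε.le
  refine ⟨n, fun i => (l : ℂ) • p i, fun i => ((l⁻¹ : ℝ) : ℂ) • q i, ?_, ?_, ?_⟩
  · rw [hpq]
    refine Finset.sum_congr rfl fun i _ => ?_
    rw [TensorProduct.smul_tmul_smul, ← Complex.ofReal_mul, mul_inv_cancel₀ hl0.ne']
    simp
  · have : ∑ i, ((l : ℂ) • p i) * star ((l : ℂ) • p i) = ((l ^ 2 : ℝ) : ℂ) • ∑ i, p i * star (p i) := by
      rw [Finset.smul_sum]
      refine Finset.sum_congr rfl fun i _ => ?_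
      rw [star_smul, smul_mul_smul_comm]
      simp [sq]
    rw [this, norm_smul, hP2, Complex.norm_real, Real.norm_of_nonneg (by positivity), hl, div_pow, hse,
      div_mul_eq_mul_div, div_le_iff₀ (by positivity)]
    gcongr
  · have : ∑ i, star (((l⁻¹ : ℝ) : ℂ) • q i) * (((l⁻¹ : ℝ) : ℂ) • q i) =
        ((l⁻¹ ^ 2 : ℝ) : ℂ) • ∑ i, star (q i) * q i := by
      rw [Finset.smul_sum]
      refine Finset.sum_congr rfl fun i _ => ?_
      rw [star_smul, smul_mul_smul_comm]
      simp [sq]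
    rw [this, norm_smul, hQ2, Complex.norm_real, Real.norm_of_nonneg (by positivity), hl, inv_div,
      div_pow, hse, div_mul_eq_mul_div, div_le_iff₀ (by positivity), ← mul_pow, ← sq]
    gcongr

theorem aux_sigma_summable {A : Type*} [CStarAlgebra A] {n : ℕ → ℕ} (p : (Σ k, Fin (n k)) → A)
    (δ : ℕ → ℝ) (hδ : Summable δ) (hp : ∀ k, ‖∑ i, p ⟨k, i⟩ * star (p ⟨k, i⟩)‖ ≤ δ k) :
    Summable fun i => p i * star (p i) := by
  classical
  rw [summable_iff_vanishing_norm]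
  intro ε hε
  obtain ⟨t, ht⟩ := summable_iff_vanishing_norm.1 hδ ε hε
  refine ⟨t.sigma fun _ => Finset.univ, fun s hs => ?_⟩
  have h1 : s ⊆ (s.image Sigma.fst).sigma fun _ => Finset.univ := by
    intro i hi
    simp only [Finset.mem_sigma, Finset.mem_univ, and_true]
    exact Finset.mem_image_of_mem _ hi
  have h2 : Disjoint (s.image Sigma.fst) t := by
    rw [Finset.disjoint_left] at hs ⊢
    intro k hk hkt
    obtain ⟨i, hi, rfl⟩ := Finset.mem_image.1 hk
    exact hs hi (by simpa using hkt)
  calc _ ≤ _ := aux_norm_sum_mono h1 p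
    _ = ‖∑ k ∈ s.image Sigma.fst, ∑ i, p ⟨k, i⟩ * star (p ⟨k, i⟩)‖ := by rw [Finset.sum_sigma]
    _ ≤ ∑ k ∈ s.image Sigma.fst, δ k := norm_sum_le_of_le _ fun k _ => hp k
    _ ≤ ‖∑ k ∈ s.image Sigma.fst, δ k‖ := le_abs_self _
    _ < ε := ht _ h2

theorem aux_series {A X : Type*} [CStarAlgebra A] [NormedAddCommGroup X] [NormedSpace ℂ X]
    [CompleteSpace X] (ιh : A ⊗[ℂ] A →ₗ[ℂ] X)
    (hiso : ∀ y : A ⊗[ℂ] A, ‖ιh y‖ = haagerupNorm A y) (hdense : DenseRange ιh) (z : X) :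
    ∃ (n : ℕ → ℕ) (p q : (Σ k, Fin (n k)) → A), (Summable fun i => p i * star (p i)) ∧
      (Summable fun i => star (q i) * q i) ∧ HasSum (fun i => ιh (p i ⊗ₜ[ℂ] q i)) z := by
  have hz : z ∈ closure ((LinearMap.range ιh).toAddSubgroup : Set X) := hdense z
  obtain ⟨v, hv1, hv2, -, hv4⟩ := controlled_sum_of_mem_closure hz (b := fun n => (1 / 2 : ℝ) ^ n)
    (fun n => by positivity)
  have hv : ∀ k, ∃ u, ιh u = v k := fun k => hv2 k
  choose u hu using hv
  have hrep := fun k => aux_repr (u k) (‖v k‖ + (1 / 2) ^ k) (by positivity)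
    (by rw [← hiso, hu]; exact lt_add_of_pos_right _ (by positivity))
  choose n p q hpq hp hq using hrep
  have hvs : Summable fun k => ‖v k‖ := by
    rw [← summable_nat_add_iff 1]
    refine Summable.of_nonneg_of_le (fun _ => norm_nonneg _)
      (fun k => (hv4 (k + 1) k.succ_pos).le) ?_
    exact (summable_nat_add_iff 1).2 summable_geometric_two
  have hδ : Summable fun k => ‖v k‖ + (1 / 2 : ℝ) ^ k := hvs.add summable_geometric_two
  have hps : Summable fun i : (Σ k, Fin (n k)) => p i.1 i.2 * star (p i.1 i.2) :=
    aux_sigma_summable (fun i : (Σ k, Fin (n k)) => p i.1 i.2) _ hδ hp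
  have hqs : Summable fun i : (Σ k, Fin (n k)) => star (q i.1 i.2) * q i.1 i.2 := by
    have := aux_sigma_summable (fun i : (Σ k, Fin (n k)) => star (q i.1 i.2)) _ hδ
      (fun k => by simpa using hq k)
    simpa using this
  refine ⟨n, fun i => p i.1 i.2, fun i => q i.1 i.2, hps, hqs, ?_⟩
  have hsum : Summable fun i : (Σ k, Fin (n k)) => ιh (p i.1 i.2 ⊗ₜ[ℂ] q i.1 i.2) := by
    classical
    rw [summable_iff_vanishing_norm]
    intro ε hε
    obtain ⟨t1, ht1⟩ := summable_iff_vanishing_norm.1 hps ε hε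
    obtain ⟨t2, ht2⟩ := summable_iff_vanishing_norm.1 hqs ε hε
    refine ⟨t1 ∪ t2, fun s hs => ?_⟩
    rw [← map_sum, hiso]
    have d1 := ht1 s (Finset.disjoint_of_subset_right Finset.subset_union_left hs)
    have d2 := ht2 s (Finset.disjoint_of_subset_right Finset.subset_union_right hs)
    refine (aux_haag_le s _ _).trans_lt ?_
    calc _ < √ε * √ε := mul_lt_mul'' (Real.sqrt_lt_sqrt (norm_nonneg _) d1)
          (Real.sqrt_lt_sqrt (norm_nonneg _) d2) (Real.sqrt_nonneg _) (Real.sqrt_nonneg _)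
      _ = ε := Real.mul_self_sqrt hε.le
  have h1 : HasSum v (∑' i : (Σ k, Fin (n k)), ιh (p i.1 i.2 ⊗ₜ[ℂ] q i.1 i.2)) := by
    refine hsum.hasSum.sigma fun k => ?_
    rw [← hu k, hpq k, map_sum]
    exact hasSum_fintype _
  have h2 := h1.tendsto_sum_nat.comp (tendsto_add_atTop_nat 1)
  rw [tendsto_nhds_unique hv1 h2]
  exact hsum.hasSum

theorem aux_alg {A : Type*} [CStarAlgebra A] {n : ℕ} (p q : Fin n → A)
    (hs : ∀ g : A →L[ℂ] ℂ, ∑ i, g (q i) • p i = 0) : ∑ i, p i ⊗ₜ[ℂ] q i = 0 := by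
  let W : Submodule ℂ A := Submodule.span ℂ (Set.range q)
  have : FiniteDimensional ℂ W := FiniteDimensional.span_of_finite ℂ (Set.finite_range q)
  let b := Module.finBasis ℂ W
  have hg : ∀ k, ∃ g : A →L[ℂ] ℂ, ∀ w : W, g w = b.coord k w := fun k => by
    obtain ⟨g, hg, -⟩ := exists_extension_norm_eq W (LinearMap.toContinuousLinearMap (b.coord k))
    exact ⟨g, hg⟩
  choose g hg using hg
  have hqW : ∀ i, q i ∈ W := fun i => Submodule.subset_span ⟨i, rfl⟩
  have hq : ∀ i, q i = ∑ k, g k (q i) • (b k : A) := fun i => by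
    have h := congrArg (Subtype.val) (b.sum_repr ⟨q i, hqW i⟩)
    simp only [Submodule.coe_sum, Submodule.coe_smul] at h
    conv_lhs => rw [← h]
    refine Finset.sum_congr rfl fun k _ => ?_
    have := hg k ⟨q i, hqW i⟩
    rw [this, Module.Basis.coord_apply]
  calc ∑ i, p i ⊗ₜ[ℂ] q i = ∑ i, ∑ k, (g k (q i) • p i) ⊗ₜ[ℂ] (b k : A) := by
        refine Finset.sum_congr rfl fun i _ => ?_
        conv_lhs => rw [hq i, TensorProduct.tmul_sum]
        exact Finset.sum_congr rfl fun k _ => by rw [TensorProduct.smul_tmul]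
    _ = 0 := by
        rw [Finset.sum_comm]
        refine Finset.sum_eq_zero fun k _ => ?_
        rw [← TensorProduct.sum_tmul, hs, TensorProduct.zero_tmul]

theorem aux_main
    {A D : Type*} [CStarAlgebra A] [CStarAlgebra D]
    (e₁ e₂ : A →⋆ₐ[ℂ] D)
    (j : A ⊗[ℂ] A →ₗ[ℂ] D) (hj : ∀ a b : A, j (a ⊗ₜ[ℂ] b) = e₁ a * e₂ b)
    (hjdense : DenseRange j)
    (S₁ : (A →L[ℂ] ℂ) → D →L[ℂ] A)
    (hS₁ : ∀ (ω : A →L[ℂ] ℂ) (a b : A), S₁ ω (j (a ⊗ₜ[ℂ] b)) = ω a • b)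
    (φ : A →⋆ₐ[ℂ] D)
    (h : A →L[ℂ] ℂ)
    (hfaithful : ∀ a : A, h (star a * a) = 0 → a = 0)
    (hrightinv : ∀ a : A, S₁ h (φ a) = h a • 1)
    {X : Type*} [NormedAddCommGroup X] [NormedSpace ℂ X] [CompleteSpace X]
    (ιh : A ⊗[ℂ] A →ₗ[ℂ] X)
    (hiso : ∀ y : A ⊗[ℂ] A, ‖ιh y‖ = haagerupNorm A y)
    (hdense : DenseRange ιh)
    (T₁ : X →L[ℂ] D)
    (hT₁ : ∀ a b : A, T₁ (ιh (a ⊗ₜ[ℂ] b)) = φ a * e₂ b) :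
    Function.Injective T₁ ∧ ∀ x : A ⊗[ℂ] A, T₁ (ιh x) = 0 → x = 0 := by
  have hmod : ∀ (d : D) (b : A), S₁ h (d * e₂ b) = S₁ h d * b := by
    intro d b
    refine hjdense.induction_on (p := fun d => S₁ h (d * e₂ b) = S₁ h d * b) d
      (isClosed_eq (by fun_prop) (by fun_prop)) fun x => ?_
    induction x with
    | zero => simp
    | add x y hx hy => simp only [map_add, add_mul, hx, hy]
    | tmul a c =>
      rw [hj, mul_assoc, ← map_mul, ← hj, ← hj, hS₁, hS₁, smul_mul_assoc]
  have hφ : ∀ a b, S₁ h (φ a * e₂ b) = h a • b := fun a b => by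
    rw [hmod, hrightinv, smul_mul_assoc, one_mul]
  -- slices of elements of the kernel
  have hslice : ∀ {I : Type} (p q : I → A) (g : A →L[ℂ] ℂ) (y : A),
      HasSum (fun i => ιh (p i ⊗ₜ[ℂ] q i)) (0 : X) ∨
      HasSum (fun i => φ (p i) * e₂ (q i)) (0 : D) →
      HasSum (fun i => g (q i) • p i) y → y = 0 := by
    intro I p q g y h0 hy
    have h1 : HasSum (fun i => φ (p i) * e₂ (q i)) (0 : D) := by
      rcases h0 with h0 | h0
      · simpa [hT₁] using h0.mapL T₁
      · exact h0
    apply hfaithful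
    have h2 := (((h1.mul_left (φ (star y))).mapL (S₁ h)).mapL g)
    have h3 := (hy.mul_left (star y)).mapL h
    rw [mul_zero, map_zero, map_zero] at h2
    refine h3.unique ?_
    convert h2 using 2 with i
    rw [← mul_assoc, ← map_mul, hφ, map_smul, mul_smul_comm, map_smul, smul_eq_mul, smul_eq_mul,
      mul_comm]
  have hinj : ∀ z, T₁ z = 0 → z = 0 := by
    intro z hz
    obtain ⟨n, p, q, hp, hq, hs⟩ := aux_series ιh hiso hdense z
    have hbd : ∀ a b : A, ‖ιh (a ⊗ₜ[ℂ] b)‖ ≤ 1 * ‖a‖ * ‖b‖ := fun a b => by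
      have := aux_haag_le (Finset.univ : Finset Unit) (fun _ => a) (fun _ => b)
      simp only [Finset.univ_unique, Finset.sum_const, Finset.card_singleton, one_smul,
        CStarRing.norm_self_mul_star, CStarRing.norm_star_mul_self,
        Real.sqrt_mul_self (norm_nonneg _)] at this
      rwa [hiso, one_mul]
    let τ : A →L[ℂ] A →L[ℂ] X :=
      LinearMap.mkContinuous₂ ((TensorProduct.mk ℂ A A).compr₂ ιh) 1 hbd
    have hτ : ∀ a b, τ a b = ιh (a ⊗ₜ[ℂ] b) := fun a b => rfl
    refine aux_core τ (fun s p q => ?_) p q hp hq z (by simpa only [hτ] using hs) fun g => ?_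
    · simp only [hτ]
      rw [← map_sum, hiso]
      exact aux_haag_le s p q
    · obtain ⟨R, hR⟩ := aux_R hp
      have hy := hR ⟨fun i => g (q i), aux_mem hq g⟩
      have h0 := hs.mapL T₁
      simp only [hT₁, hz] at h0
      have := hslice p q g _ (Or.inr h0) hy
      rw [this] at hy
      exact hy
  refine ⟨(injective_iff_map_eq_zero T₁).2 hinj, fun x hx => ?_⟩
  obtain ⟨n, p, q, rfl⟩ := aux_exists_fin x
  refine aux_alg p q fun g => hslice p q g _ (Or.inr ?_) (hasSum_fintype _)
  rw [map_sum, map_sum] at hx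
  simp only [hT₁] at hx
  rw [← hx]
  exact hasSum_fintype _

end HaagerupAux

/-- Let `A` be a unital C*-algebra with a comultiplication
`φ : A → A ⊗ A` into the minimal C*-tensor product, and let `h` be a faithful state on
`A` which is both left and right invariant: `(ι ⊗ h)φ(a) = h(a)1` and
`(h ⊗ ι)φ(a) = h(a)1`.  Then the extension `T₁ : A ⊗_h A → A ⊗ A` of
`a ⊗ b ↦ φ(a)(1 ⊗ b)` is injective; in particular if `x ∈ A ⊙ A` and `T₁(x) = 0` then
`x = 0`.  The minimal C*-tensor product is modelled by a unital C*-algebra `D` with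
commuting unital embeddings `e₁, e₂`, the induced map `j` on `A ⊙ A` with dense range,
slice maps `S₁ ω = ω ⊗ ι` and `S₂ ω = ι ⊗ ω` which separate the points of `D`; the
Haagerup tensor product `A ⊗_h A` is modelled by an abstract completion `X` of `A ⊙ A`
for the Haagerup norm. -/
theorem T1_injective_of_faithful_invariant_state
    {A D : Type*}
    [NormedRing A] [StarRing A] [CStarRing A] [CompleteSpace A]
    [NormedAlgebra ℂ A] [StarModule ℂ A]
    [NormedRing D] [StarRing D] [CStarRing D] [CompleteSpace D]
    [NormedAlgebra ℂ D] [StarModule ℂ D]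
    (e₁ e₂ : A →⋆ₐ[ℂ] D)
    (hcomm : ∀ a b : A, Commute (e₁ a) (e₂ b))
    (j : A ⊗[ℂ] A →ₗ[ℂ] D) (hj : ∀ a b : A, j (a ⊗ₜ[ℂ] b) = e₁ a * e₂ b)
    (hjdense : DenseRange j)
    (S₁ S₂ : (A →L[ℂ] ℂ) → D →L[ℂ] A)
    (hS₁ : ∀ (ω : A →L[ℂ] ℂ) (a b : A), S₁ ω (j (a ⊗ₜ[ℂ] b)) = ω a • b)
    (hS₂ : ∀ (ω : A →L[ℂ] ℂ) (a b : A), S₂ ω (j (a ⊗ₜ[ℂ] b)) = ω b • a)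
    (hsep : ∀ d : D, (∀ ω : A →L[ℂ] ℂ, S₂ ω d = 0) → d = 0)
    (φ : A →⋆ₐ[ℂ] D)
    (h : A →L[ℂ] ℂ) (hone : h 1 = 1)
    (hpos : ∀ a : A, 0 ≤ h (star a * a))
    (hfaithful : ∀ a : A, h (star a * a) = 0 → a = 0)
    (hleftinv : ∀ a : A, S₂ h (φ a) = h a • 1)
    (hrightinv : ∀ a : A, S₁ h (φ a) = h a • 1)
    {X : Type*} [NormedAddCommGroup X] [NormedSpace ℂ X] [CompleteSpace X]
    (ιh : A ⊗[ℂ] A →ₗ[ℂ] X)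
    (hiso : ∀ y : A ⊗[ℂ] A, ‖ιh y‖ = haagerupNorm A y)
    (hdense : DenseRange ιh)
    (T₁ : X →L[ℂ] D)
    (hT₁ : ∀ a b : A, T₁ (ιh (a ⊗ₜ[ℂ] b)) = φ a * e₂ b) :
    Function.Injective T₁ ∧ ∀ x : A ⊗[ℂ] A, T₁ (ιh x) = 0 → x = 0 := by
  let _ : CStarAlgebra A := {}
  let _ : CStarAlgebra D := {}
  exact aux_main e₁ e₂ j hj hjdense S₁ hS₁ φ h hfaithful hrightinv ιh hiso hdense T₁ hT₁
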